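/- The quotient ring ℤ[u,v,w,x]/I is a free ℤ-module of rank 240. (By the presentation H^*(E₈/C; ℤ) ≅ ℤ[u,v,w,x]/I of the integral cohomology of the homogeneous space E₈/C, this expresses that H^*(E₈/C; ℤ) is torsion-free with total Betti number 240 = |W(E₈)|/|W(E₇)|.) -/

import Mathlib

open MvPolynomial

noncomputable section

namespace E8C

/-- `u = X 0`, of degree 2. -/
def u : MvPolynomial (Fin 4) ℤ := X 0
/-- `v = X 1`, of degree 12. -/
def v : MvPolynomial (Fin 4) ℤ := X 1
/-- `w = X 2`, of degree 20. -/
def w : MvPolynomial (Fin 4) ℤ := X 2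
/-- `x = X 3`, of degree 30. -/
def x : MvPolynomial (Fin 4) ℤ := X 3

def r15 : MvPolynomial (Fin 4) ℤ := u ^ 15 - 2 * x

def r20 : MvPolynomial (Fin 4) ℤ :=
  9 * u ^ 20 + 45 * u ^ 14 * v + 12 * u ^ 10 * w + 60 * u ^ 8 * v ^ 2
    + 30 * u ^ 4 * v * w + 10 * u ^ 2 * v ^ 3 + 3 * w ^ 2

def r24 : MvPolynomial (Fin 4) ℤ :=
  11 * u ^ 24 + 60 * u ^ 18 * v + 21 * u ^ 14 * w + 105 * u ^ 12 * v ^ 2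
    + 60 * u ^ 8 * v * w + 60 * u ^ 6 * v ^ 3 + 9 * u ^ 4 * w ^ 2
    + 30 * u ^ 2 * v ^ 2 * w + 5 * v ^ 4

def r30 : MvPolynomial (Fin 4) ℤ :=
  -9 * x ^ 2 - 12 * u ^ 9 * v * x - 6 * u ^ 5 * w * x + 9 * u ^ 14 * v * w
    - 10 * u ^ 12 * v ^ 3 - 3 * u ^ 10 * w ^ 2 + 30 * u ^ 8 * v ^ 2 * w
    - 35 * u ^ 6 * v ^ 4 + 6 * u ^ 4 * v * w ^ 2 - 10 * u ^ 2 * v ^ 3 * w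
    - 4 * v ^ 5 - 2 * w ^ 3

/-- The ideal of relations in the presentation `H^*(E₈/C; ℤ) ≅ ℤ[u,v,w,x]/I`. -/
def relIdeal : Ideal (MvPolynomial (Fin 4) ℤ) :=
  Ideal.span {r15, r20, r24, r30}

end E8C

end

/-!
In a reduced quotient of `ℤ[u,v,w,x]/I` all four variables vanish, so they are nilpotent modulo `I`
and the quotient is a finite `ℤ`-module. Localised at `(p, u, v, w, x)` for a prime `p`, the
polynomial ring is therefore a local ring in which the regular sequence `u, v, w, x, p` can be
exchanged, one element at a time, for `r15, r20, r24, r30, p`; hence `p` is a nonzerodivisor modulo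
`I`, and the quotient is torsion-free, i.e. free. Its rank can be read off modulo any prime. Modulo
`5` the relations become `x = 3u¹⁵`, `u²⁴ = 0`, `w² = u¹⁰w + 2u²⁰`, `v⁵ = 2u²⁰w`, a tower of monic
extensions of degrees `24`, `2`, `5`.
-/

namespace CompleteIntersection

open IsLocalRing RingTheory.Sequence

open scoped Pointwise

section Exchange

variable {R : Type*} [CommRing R]

theorem isSMulRegular_iff_of_sub_mul_mem_annihilator {N : Type*} [AddCommGroup N] [Module R N]
    {a b c : R} (hc : IsUnit c) (h : b - c * a ∈ Module.annihilator R N) :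
    IsSMulRegular N b ↔ IsSMulRegular N a := by
  have hsmul (y : N) : b • y = (c * a) • y := by
    rw [← sub_eq_zero, ← sub_smul, Module.mem_annihilator.mp h y]
  rw [← (hc.isSMulRegular N).mul_iff_right (b := a)]
  simp only [IsSMulRegular, hsmul]

theorem le_annihilator_quotient_smul_top (M : Type*) [AddCommGroup M] [Module R M]
    (I : Ideal R) : I ≤ Module.annihilator R (M ⧸ (I • ⊤ : Submodule R M)) := by
  rw [Submodule.annihilator_quotient]
  exact fun r hr ↦ Submodule.mem_colon.mpr fun m _ ↦ Submodule.smul_mem_smul hr trivial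

theorem ofList_cons_sup_annihilator_le {M : Type*} [AddCommGroup M] [Module R M]
    {as : List R} {a b c : R} (hc : IsUnit c) (h : b - c * a ∈ Ideal.ofList as) :
    Ideal.ofList (a :: as) ⊔ Module.annihilator R M ≤
      Ideal.ofList as ⊔ Module.annihilator R (QuotSMulTop b M) := by
  have ha : a ∈ Ideal.ofList as ⊔ Module.annihilator R (QuotSMulTop b M) := by
    rw [← Ideal.unit_mul_mem_iff_mem _ hc, ← sub_sub_cancel b (c * a)]
    exact sub_mem (Ideal.mem_sup_right (QuotSMulTop.mem_annihilator M b)) (Ideal.mem_sup_left h)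
  rw [Ideal.ofList_cons]
  refine sup_le (sup_le ((Ideal.span_singleton_le_iff_mem _).mpr ha) le_sup_left) ?_
  exact le_sup_of_le_right (LinearMap.annihilator_le_of_surjective _ (Submodule.mkQ_surjective _))

variable [IsLocalRing R]

theorem exists_perm_cons_isUnit {as : List R} {b : R} (hb : b ∈ Ideal.ofList as)
    (hb' : b ∉ maximalIdeal R * Ideal.ofList as) :
    ∃ a as' c, as.Perm (a :: as') ∧ IsUnit c ∧ b - c * a ∈ Ideal.ofList as' := by
  induction as generalizing b with
  | nil => simp_all
  | cons a t ih =>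
    rw [Ideal.ofList_cons] at hb hb'
    obtain ⟨y, hy, d, hd, rfl⟩ := Submodule.mem_sup.mp hb
    obtain ⟨c, rfl⟩ := Ideal.mem_span_singleton'.mp hy
    by_cases hc : IsUnit c
    · exact ⟨a, t, c, .refl _, hc, by simpa using hd⟩
    have hd' : d ∉ maximalIdeal R * Ideal.ofList t := fun hdt ↦ hb' <|
      add_mem (Ideal.mul_mem_mul hc (Ideal.mem_sup_left (Ideal.mem_span_singleton_self a)))
        (Ideal.mul_mono_right le_sup_right hdt)
    obtain ⟨a', t', c', hperm, hc', hmem⟩ := ih hd hd'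
    refine ⟨a', a :: t', c', (hperm.cons a).trans (.swap _ _ _), hc', ?_⟩
    rw [Ideal.ofList_cons, add_sub_assoc]
    exact add_mem (Ideal.mem_sup_left hy) (Ideal.mem_sup_right hmem)

variable [IsNoetherianRing R]

theorem exists_mem_isSMulRegular_notMem_maximalIdeal_mul {N : Type*} [AddCommGroup N]
    [Module R N] [Module.Finite R N] [Nontrivial N] {J : Ideal R} {r : R}
    (hr : IsSMulRegular N r) (hJ : r ∈ (J ⊔ Module.annihilator R N).radical) :
    ∃ b ∈ J, b ∉ maximalIdeal R * J ∧ IsSMulRegular N b := by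
  have hJP : ∀ P ∈ associatedPrimes R N, ¬ J ≤ P := by
    intro P hP hJP
    have hrP : r ∈ P := hP.isPrime.radical_le_iff.mpr
      (sup_le hJP (Submodule.annihilator_top.symm.trans_le hP.annihilator_le)) hJ
    have hrU : r ∈ ⋃ P ∈ associatedPrimes R N, (P : Set R) := Set.mem_biUnion hP hrP
    rw [biUnion_associatedPrimes_eq_compl_regular] at hrU
    exact hrU hr
  have hJm : ¬ J ≤ maximalIdeal R * J := by
    intro hle
    obtain rfl : J = ⊥ := Submodule.eq_bot_of_le_smul_of_le_jacobson_bot _ _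
      (IsNoetherian.noetherian J) hle (maximalIdeal_le_jacobson ⊥)
    obtain ⟨P, hP⟩ := associatedPrimes.nonempty R N
    exact hJP P hP bot_le
  by_contra! hcon
  have hcover : (J : Set R) ⊆
      ⋃ P ∈ insert (maximalIdeal R * J) (associatedPrimes R N), (P : Set R) := by
    rw [Set.biUnion_insert, biUnion_associatedPrimes_eq_compl_regular]
    exact fun b hb ↦ or_iff_not_imp_left.mpr (hcon b hb)
  -- Prime avoidance allows the one ideal `maximalIdeal R * J` that need not be prime.
  obtain ⟨P, rfl | hP, hJP'⟩ := (Ideal.subset_union_prime_finite (f := id)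
    ((associatedPrimes.finite R N).insert _) (maximalIdeal R * J) (maximalIdeal R * J)
    fun P hP hne _ ↦ (hP.resolve_left hne).isPrime).mp hcover
  · exact hJm hJP'
  · exact hJP P hP hJP'

variable {M : Type*} [AddCommGroup M] [Module R M] [Module.Finite R M]

theorem isRegular_cons_of_sub_mul_mem {as : List R} {a b c : R} (hreg : IsRegular M (b :: as))
    (has : ∀ s ∈ a :: as, s ∈ maximalIdeal R) (hc : IsUnit c) (h : b - c * a ∈ Ideal.ofList as) :
    IsRegular M (a :: as) := by
  have := hreg.nontrivial
  have hb := (isRegular_of_perm hreg (List.perm_append_singleton b as).symm).toIsWeaklyRegular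
  have ha : IsWeaklyRegular M (as ++ [a]) := by
    rwa [isWeaklyRegular_append_iff, isWeaklyRegular_singleton_iff,
      ← isSMulRegular_iff_of_sub_mul_mem_annihilator hc (le_annihilator_quotient_smul_top M _ h),
      ← isWeaklyRegular_singleton_iff, ← isWeaklyRegular_append_iff]
  have hperm := List.perm_append_singleton a as
  exact isRegular_of_perm
    (.of_isWeaklyRegular_of_mem_maximalIdeal M (fun s hs ↦ has s (hperm.mem_iff.mp hs)) ha) hperm

theorem exists_isRegular_cons_of_mem_radical {rs : List R} {r : R} {J : Ideal R}
    (hreg : IsRegular M (r :: rs)) (hJm : J ≤ maximalIdeal R)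
    (hrJ : r ∈ (J ⊔ Module.annihilator R M).radical) :
    ∃ b ∈ J, b ∉ maximalIdeal R * J ∧ IsRegular M (b :: rs) := by
  have := hreg.nontrivial
  have hrs := isRegular_of_perm hreg (List.perm_append_singleton r rs).symm
  obtain ⟨hrs', hr⟩ := (isWeaklyRegular_append_iff M rs [r]).mp hrs.toIsWeaklyRegular
  rw [isWeaklyRegular_singleton_iff] at hr
  have hne : Ideal.ofList rs • (⊤ : Submodule R M) ≠ ⊤ :=
    ne_top_of_le_ne_top hreg.top_ne_smul.symm
      (Submodule.smul_mono_left (Ideal.ofList_cons r rs ▸ le_sup_right))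
  have : Nontrivial (M ⧸ (Ideal.ofList rs • ⊤ : Submodule R M)) :=
    Submodule.Quotient.nontrivial_iff.mpr hne
  have hann := LinearMap.annihilator_le_of_surjective _
    (Submodule.mkQ_surjective (Ideal.ofList rs • ⊤ : Submodule R M))
  obtain ⟨b, hbJ, hbm, hb⟩ := exists_mem_isSMulRegular_notMem_maximalIdeal_mul hr
    (Ideal.radical_mono (sup_le_sup_left hann _) hrJ)
  have hrsm : Ideal.ofList rs ≤ maximalIdeal R :=
    le_maximalIdeal fun htop ↦ hne (by rw [htop, Submodule.top_smul])
  have hbrs : ∀ s ∈ rs ++ [b], s ∈ maximalIdeal R := by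
    simpa [or_imp, forall_and] using ⟨fun s hs ↦ hrsm (Ideal.subset_span hs), hJm hbJ⟩
  refine ⟨b, hbJ, hbm, isRegular_of_perm (.of_isWeaklyRegular_of_mem_maximalIdeal M hbrs ?_)
    (List.perm_append_singleton b rs)⟩
  exact (isWeaklyRegular_append_iff M rs [b]).mpr ⟨hrs', (isWeaklyRegular_singleton_iff _ b).mpr hb⟩

/- Induction on `rs`: some `b ∈ (as)` outside `𝔪 (as)` can replace its first element. By Nakayama
`b` is part of a minimal generating set, so it can be traded for some `a ∈ as`; pass to `M/bM`. -/
theorem isRegular_of_mem_radical {rs as : List R} (hrs : IsRegular M rs)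
    (hlen : as.length ≤ rs.length) (has : ∀ a ∈ as, a ∈ maximalIdeal R)
    (hrad : ∀ r ∈ rs, r ∈ (Ideal.ofList as ⊔ Module.annihilator R M).radical) :
    IsRegular M as := by
  induction rs generalizing M as with
  | nil => simpa [List.length_eq_zero_iff.mp (Nat.le_zero.mp hlen)] using hrs
  | cons r rs ih =>
    obtain ⟨b, hbas, hbm, hb⟩ := exists_isRegular_cons_of_mem_radical hrs (Ideal.span_le.mpr has)
      (hrad r List.mem_cons_self)
    obtain ⟨a, as', c, hperm, hc, hbca⟩ := exists_perm_cons_isUnit hbas hbm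
    have hmem : ∀ s ∈ a :: as', s ∈ maximalIdeal R := fun s hs ↦ has s (hperm.mem_iff.mpr hs)
    have hofList : Ideal.ofList as = Ideal.ofList (a :: as') := by
      simp only [Ideal.ofList, hperm.mem_iff]
    rw [isRegular_cons_iff] at hb
    have has' : IsRegular (QuotSMulTop b M) as' := by
      refine ih hb.2 ?_ (fun s hs ↦ hmem s (List.mem_cons_of_mem _ hs)) fun s hs ↦ ?_
      · simpa [hperm.length_eq] using hlen
      · exact Ideal.radical_mono (hofList ▸ ofList_cons_sup_annihilator_le hc hbca)
          (hrad s (List.mem_cons_of_mem _ hs))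
    have hba : IsRegular M (b :: as') := (isRegular_cons_iff M b as').mpr ⟨hb.1, has'⟩
    exact isRegular_of_perm (isRegular_cons_of_sub_mul_mem hba hmem hc hbca) hperm.symm

end Exchange

section MvPolynomial

variable {R σ : Type*} [CommRing R]

theorem isSMulRegular_X_quotient_span {s : Set σ} {i : σ} (hi : i ∉ s) :
    IsSMulRegular (MvPolynomial σ R ⧸ Ideal.span (X '' s : Set (MvPolynomial σ R)))
      (X i : MvPolynomial σ R) := by
  simp only [isSMulRegular_quotient_iff_mem_of_smul_mem, mem_ideal_span_X_image, smul_eq_mul]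
  intro g hg m hm
  obtain ⟨j, hj, hmj⟩ := hg (Finsupp.single i 1 + m) (by simpa [support_X_mul] using hm)
  have hij : i ≠ j := fun h ↦ hi (h ▸ hj)
  exact ⟨j, hj, by simpa [Finsupp.single_apply, hij] using hmj⟩

theorem isSMulRegular_C_quotient_span {p : R} (hp : IsSMulRegular R p) (s : Set σ) :
    IsSMulRegular (MvPolynomial σ R ⧸ Ideal.span (X '' s : Set (MvPolynomial σ R)))
      (C p : MvPolynomial σ R) := by
  simp only [isSMulRegular_quotient_iff_mem_of_smul_mem, mem_ideal_span_X_image, smul_eq_mul]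
  intro g hg m hm
  refine hg m (mem_support_iff.mpr ?_)
  rw [coeff_C_mul]
  exact fun h ↦ mem_support_iff.mp hm (hp.right_eq_zero_of_smul h)

theorem isWeaklyRegular_map_X {l : List σ} (hl : l.Nodup) :
    IsWeaklyRegular (MvPolynomial σ R) (l.map X : List (MvPolynomial σ R)) := by
  induction l using List.reverseRecOn with
  | nil => simp
  | append_singleton l i ih =>
    have hspan : Ideal.ofList (l.map X : List (MvPolynomial σ R)) =
        Ideal.span (X '' {j | j ∈ l}) := by
      simp [Ideal.ofList, Set.image]
    rw [List.nodup_append] at hl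
    rw [List.map_append, isWeaklyRegular_append_iff, List.map_singleton,
      isWeaklyRegular_singleton_iff, smul_eq_mul, Ideal.mul_top, hspan]
    exact ⟨ih hl.1, isSMulRegular_X_quotient_span fun hi ↦ hl.2.2 i hi i (by simp) rfl⟩

theorem isWeaklyRegular_map_X_append_C [Fintype σ] {p : R} (hp : IsSMulRegular R p) :
    IsWeaklyRegular (MvPolynomial σ R)
      (Finset.univ.toList.map X ++ [C p] : List (MvPolynomial σ R)) := by
  have hspan : Ideal.ofList (Finset.univ.toList.map X : List (MvPolynomial σ R)) =
      Ideal.span (X '' Set.univ) := by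
    simp [Ideal.ofList, Set.image]
  rw [isWeaklyRegular_append_iff, isWeaklyRegular_singleton_iff, smul_eq_mul, Ideal.mul_top, hspan]
  exact ⟨isWeaklyRegular_map_X (Finset.nodup_toList _), isSMulRegular_C_quotient_span hp _⟩

theorem comap_constantCoeff_le {p : R} {P : Ideal (MvPolynomial σ R)} (hX : ∀ i, X i ∈ P)
    (hp : C p ∈ P) : (Ideal.span {p}).comap constantCoeff ≤ P := by
  intro g hg
  obtain ⟨c, hc⟩ := Ideal.mem_span_singleton'.mp (Ideal.mem_comap.mp hg)
  have hvars : g - C (constantCoeff g) ∈ Ideal.span (X '' Set.univ) := by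
    refine mem_ideal_span_X_image.mpr fun m hm ↦ ?_
    have hm0 : m ≠ 0 := by
      rintro rfl
      simp [constantCoeff_eq] at hm
    simpa using Finsupp.ne_iff.mp hm0
  have hspan : Ideal.span (X '' Set.univ) ≤ P :=
    Ideal.span_le.mpr (by rintro _ ⟨i, -, rfl⟩; exact hX i)
  rw [← sub_add_cancel g (C (constantCoeff g))]
  exact add_mem (hspan hvars) (by rw [← hc, C_mul]; exact P.mul_mem_left _ hp)

theorem finite_quotient_of_X_mem_radical [Finite σ] {I : Ideal (MvPolynomial σ R)}
    (hrad : ∀ i, X i ∈ I.radical) : Module.Finite R (MvPolynomial σ R ⧸ I) := by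
  have hX (i) : IsIntegral R (Ideal.Quotient.mk I (X i)) := by
    obtain ⟨n, hn⟩ := hrad i
    refine .of_pow n.succ_pos ?_
    rw [pow_succ, ← map_pow, Ideal.Quotient.eq_zero_iff_mem.mpr hn, zero_mul]
    exact isIntegral_zero
  have : Algebra.IsIntegral R (MvPolynomial σ R ⧸ I) := by
    refine ⟨fun y ↦ ?_⟩
    obtain ⟨g, rfl⟩ := Ideal.Quotient.mk_surjective y
    induction g using MvPolynomial.induction_on with
    | C r => exact isIntegral_algebraMap (R := R)
    | add g h hg hh => simpa only [map_add] using hg.add hh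
    | mul_X g i hg => simpa only [map_mul] using hg.mul (hX i)
  exact Algebra.finite_iff_isIntegral_and_finiteType.mpr ⟨this, inferInstance⟩

variable [Fintype σ] {fs : List (MvPolynomial σ R)}

section IsNoetherianRing

variable [IsNoetherianRing R] {p : R}

theorem isRegular_localization_append_C (hp : IsSMulRegular R p)
    {𝔪 : Ideal (MvPolynomial σ R)} [𝔪.IsPrime] (hX : ∀ i, X i ∈ 𝔪) (hpm : C p ∈ 𝔪)
    (hlen : fs.length ≤ Fintype.card σ) (hfs : Ideal.ofList fs ≤ 𝔪)
    (hrad : ∀ i, X i ∈ (Ideal.ofList fs).radical) :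
    IsRegular (Localization.AtPrime 𝔪)
      ((fs ++ [C p]).map (algebraMap (MvPolynomial σ R) (Localization.AtPrime 𝔪))) := by
  have hXp : ∀ r ∈ Finset.univ.toList.map X ++ [C p], r ∈ 𝔪 := by
    simpa [or_imp, forall_and] using ⟨hX, hpm⟩
  have hreg := (isWeaklyRegular_map_X_append_C (σ := σ) hp).isRegular_of_isLocalization_of_mem
    (Localization.AtPrime 𝔪) 𝔪 hXp
  refine isRegular_of_mem_radical hreg (by simpa using hlen) ?_ ?_
  · simp only [List.mem_map, List.mem_append, List.mem_singleton]
    rintro _ ⟨y, hy | rfl, rfl⟩ <;> rw [IsLocalization.AtPrime.to_map_mem_maximal_iff _ 𝔪]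
    · exact hfs (Ideal.subset_span hy)
    · exact hpm
  · simp only [List.mem_map, List.mem_append, List.mem_singleton]
    rw [← Ideal.map_ofList, Ideal.ofList_append]
    rintro _ ⟨y, hy, rfl⟩
    refine Ideal.radical_mono le_sup_left (Ideal.map_radical_le _ (Ideal.mem_map_of_mem _ ?_))
    obtain ⟨i, -, rfl⟩ | rfl := hy
    · exact Ideal.radical_mono le_sup_left (hrad i)
    · exact Ideal.le_radical (Ideal.mem_sup_right (Ideal.subset_span (List.mem_singleton_self _)))

theorem exists_notMem_mul_mem (hp : IsSMulRegular R p)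
    {𝔪 : Ideal (MvPolynomial σ R)} [𝔪.IsPrime] (hX : ∀ i, X i ∈ 𝔪) (hpm : C p ∈ 𝔪)
    (hlen : fs.length ≤ Fintype.card σ) (hrad : ∀ i, X i ∈ (Ideal.ofList fs).radical)
    {g : MvPolynomial σ R} (hg : C p * g ∈ Ideal.ofList fs) :
    ∃ s ∉ 𝔪, s * g ∈ Ideal.ofList fs := by
  by_cases hfs : Ideal.ofList fs ≤ 𝔪
  · have hreg := isRegular_localization_append_C hp hX hpm hlen hfs hrad
    rw [List.map_append] at hreg
    have hpreg := ((isWeaklyRegular_append_iff _ _ _).mp hreg.toIsWeaklyRegular).2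
    rw [List.map_singleton, isWeaklyRegular_singleton_iff, smul_eq_mul, Ideal.mul_top,
      ← Ideal.map_ofList] at hpreg
    refine (IsLocalization.algebraMap_mem_map_algebraMap_iff 𝔪.primeCompl _ _ _).mp
      (mem_of_isSMulRegular_quotient_of_smul_mem hpreg ?_)
    rw [smul_eq_mul, ← map_mul]
    exact Ideal.mem_map_of_mem _ hg
  · obtain ⟨s, hs, hs𝔪⟩ := SetLike.not_le_iff_exists.mp hfs
    exact ⟨s, hs𝔪, Ideal.mul_mem_right g _ hs⟩

theorem isSMulRegular_quotient_ofList (hp : IsSMulRegular R p)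
    (hmax : (Ideal.span {p}).IsMaximal) (hlen : fs.length ≤ Fintype.card σ)
    (hrad : ∀ i, X i ∈ (Ideal.ofList fs).radical) :
    IsSMulRegular (MvPolynomial σ R ⧸ Ideal.ofList fs) p := by
  set I := Ideal.ofList fs
  set 𝔪 : Ideal (MvPolynomial σ R) := (Ideal.span {p}).comap constantCoeff
  have h𝔪 : 𝔪.IsMaximal := Ideal.comap_isMaximal_of_surjective _ fun r ↦
    ⟨C r, constantCoeff_C _ r⟩
  suffices h : ∀ g, C p * g ∈ I → g ∈ I by
    refine .of_right_eq_zero_of_smul fun y hy ↦ ?_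
    obtain ⟨g, rfl⟩ := Ideal.Quotient.mk_surjective y
    rw [← algebraMap_smul (MvPolynomial σ R) p, algebraMap_eq] at hy
    exact Ideal.Quotient.eq_zero_iff_mem.mpr (h g (Ideal.Quotient.eq_zero_iff_mem.mp hy))
  intro g hg
  obtain ⟨s, hs, hsg⟩ := exists_notMem_mul_mem hp (𝔪 := 𝔪) (by simp [𝔪]) (by simp [𝔪]) hlen hrad hg
  by_contra hgI
  -- A maximal ideal over `(I : g)` contains `p` and all variables, hence equals `𝔪`.
  have hcolon : I.colon {g} ≠ ⊤ := fun htop ↦ hgI <| by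
    have h1 : 1 ∈ I.colon {g} := htop ▸ Submodule.mem_top
    simpa only [Submodule.mem_colon_singleton, smul_eq_mul, one_mul] using h1
  obtain ⟨P, hP, hle⟩ := Ideal.exists_le_maximal _ hcolon
  have hXP (i) : X i ∈ P := hP.isPrime.radical_le_iff.mpr (Ideal.le_colon.trans hle) (hrad i)
  have hpP : C p ∈ P := hle (Submodule.mem_colon_singleton.mpr hg)
  obtain rfl : 𝔪 = P := h𝔪.eq_of_le hP.ne_top (comap_constantCoeff_le hXP hpP)
  exact hs (hle (Submodule.mem_colon_singleton.mpr hsg))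

end IsNoetherianRing

theorem free_quotient_ofList [IsDomain R] [IsPrincipalIdealRing R]
    (hlen : fs.length ≤ Fintype.card σ) (hrad : ∀ i, X i ∈ (Ideal.ofList fs).radical) :
    Module.Free R (MvPolynomial σ R ⧸ Ideal.ofList fs) := by
  have := finite_quotient_of_X_mem_radical hrad
  have : Module.IsTorsionFree R (MvPolynomial σ R ⧸ Ideal.ofList fs) := by
    refine ⟨fun r hr ↦ ?_⟩
    replace hr := hr.ne_zero
    induction r using UniqueFactorizationMonoid.induction_on_prime with
    | h₁ => exact absurd rfl hr
    | h₂ r hunit => exact hunit.isSMulRegular _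
    | h₃ r p _ hp ih =>
      have hpR : IsSMulRegular R p := (IsRegular.of_ne_zero hp.ne_zero).left.isSMulRegular
      have hmax := PrincipalIdealRing.isMaximal_of_irreducible hp.irreducible
      exact (isSMulRegular_quotient_ofList hpR hmax hlen hrad).mul (ih (right_ne_zero_of_mul hr))
  exact Module.free_of_finite_type_torsion_free'

end MvPolynomial

section AdjoinRoot

open scoped Polynomial

theorem finrank_adjoinRoot (k : Type*) {B : Type*} [CommRing k] [Nontrivial k]
    [CommRing B] [Algebra k B] [Module.Free k B] {f : B[X]} (hf : f.Monic) :
    Module.finrank k (AdjoinRoot f) = Module.finrank k B * f.natDegree := by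
  have := hf.free_adjoinRoot
  cases subsingleton_or_nontrivial B
  · have : Subsingleton (AdjoinRoot f) := Module.subsingleton B _
    simp only [Module.finrank_zero_of_subsingleton, zero_mul]
  · rw [← Module.finrank_mul_finrank k B, (AdjoinRoot.powerBasis' hf).finrank,
      AdjoinRoot.powerBasis'_dim]

variable {B : Type*} [CommRing B]

theorem monic_X_sq_sub_C_mul_X_sub_C (a b : B) :
    (Polynomial.X ^ 2 - Polynomial.C a * Polynomial.X - Polynomial.C b).Monic := by
  monicity!

theorem natDegree_X_sq_sub_C_mul_X_sub_C [Nontrivial B] (a b : B) :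
    (Polynomial.X ^ 2 - Polynomial.C a * Polynomial.X - Polynomial.C b).natDegree = 2 := by
  compute_degree!

end AdjoinRoot

end CompleteIntersection

namespace E8C

open CompleteIntersection

/-- The four elements `u`, `v`, `w`, `x` of a commutative ring satisfy the defining relations of
`ℤ[u,v,w,x]/I`, i.e. they are the images of the variables under a ring homomorphism from it. -/
structure Relations {K : Type*} [CommRing K] (u v w x : K) : Prop where
  r15 : u ^ 15 - 2 * x = 0
  r20 : 9 * u ^ 20 + 45 * u ^ 14 * v + 12 * u ^ 10 * w + 60 * u ^ 8 * v ^ 2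
    + 30 * u ^ 4 * v * w + 10 * u ^ 2 * v ^ 3 + 3 * w ^ 2 = 0
  r24 : 11 * u ^ 24 + 60 * u ^ 18 * v + 21 * u ^ 14 * w + 105 * u ^ 12 * v ^ 2
    + 60 * u ^ 8 * v * w + 60 * u ^ 6 * v ^ 3 + 9 * u ^ 4 * w ^ 2
    + 30 * u ^ 2 * v ^ 2 * w + 5 * v ^ 4 = 0
  r30 : -9 * x ^ 2 - 12 * u ^ 9 * v * x - 6 * u ^ 5 * w * x + 9 * u ^ 14 * v * w
    - 10 * u ^ 12 * v ^ 3 - 3 * u ^ 10 * w ^ 2 + 30 * u ^ 8 * v ^ 2 * w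
    - 35 * u ^ 6 * v ^ 4 + 6 * u ^ 4 * v * w ^ 2 - 10 * u ^ 2 * v ^ 3 * w
    - 4 * v ^ 5 - 2 * w ^ 3 = 0

namespace Relations

variable {K : Type*} [CommRing K] {u v w x : K}

theorem map {L : Type*} [CommRing L] (φ : K →+* L) (h : Relations u v w x) :
    Relations (φ u) (φ v) (φ w) (φ x) where
  r15 := by simpa [map_ofNat φ] using congrArg φ h.r15
  r20 := by simpa [map_ofNat φ] using congrArg φ h.r20
  r24 := by simpa [map_ofNat φ] using congrArg φ h.r24
  r30 := by simpa [map_ofNat φ] using congrArg φ h.r30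

theorem u_pow_58_eq_zero (h : Relations u v w x) : u ^ 58 = 0 := by
  obtain ⟨h15, h20, h24, h30⟩ := h
  have h30' : -9 * u ^ 30 - 24 * u ^ 24 * v - 12 * u ^ 20 * w + 36 * u ^ 14 * v * w
      - 40 * u ^ 12 * v ^ 3 - 12 * u ^ 10 * w ^ 2 + 120 * u ^ 8 * v ^ 2 * w
      - 140 * u ^ 6 * v ^ 4 + 24 * u ^ 4 * v * w ^ 2 - 40 * u ^ 2 * v ^ 3 * w
      - 16 * v ^ 5 - 8 * w ^ 3 = 0 := by
    linear_combination 4 * h30 - (9 * u ^ 15 + 24 * u ^ 9 * v + 12 * u ^ 5 * w + 18 * x) * h15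
  -- The coefficients were found by solving a linear system over `ℤ`.
  linear_combination
    (-297301130966542 * u ^ 38 - 1750981731135781 * u ^ 32 * v
      - 2415493577694766 * u ^ 26 * v ^ 2 + 1219030407829450 * u ^ 20 * v ^ 3
      + 265469571216440 * u ^ 14 * v ^ 4 - 6820272029215518 * u ^ 8 * v ^ 5
      - 3256914660887919 * u ^ 2 * v ^ 6 + 1266289367578537 * u ^ 28 * w
      + 3860380835858862 * u ^ 22 * v * w - 2366383090649871 * u ^ 16 * v ^ 2 * w
      + 683178022248880 * u ^ 10 * v ^ 3 * w + 24751004716380320 * u ^ 4 * v ^ 4 * w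
      + 3844237255249473 * u ^ 18 * w ^ 2 + 4565599907474862 * u ^ 12 * v * w ^ 2
      - 14939534884559799 * u ^ 6 * v ^ 2 * w ^ 2 + 2538750337704000 * v ^ 3 * w ^ 2
      + 3901559117245730 * u ^ 8 * w ^ 3 + 5735339652457928 * u ^ 2 * v * w ^ 3) * h20
    + (389344474590665 * u ^ 34 + 1410934391129151 * u ^ 28 * v - 1362565584849315 * u ^ 22 * v ^ 2
      - 1635344973661455 * u ^ 16 * v ^ 3 + 3769386077433440 * u ^ 10 * v ^ 4
      - 11386432978940034 * u ^ 4 * v ^ 5 - 1150166334831006 * u ^ 24 * w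
      - 411185626168980 * u ^ 18 * v * w + 2098222240027440 * u ^ 12 * v ^ 2 * w
      + 7246765616048630 * u ^ 6 * v ^ 3 * w + 3046500405244800 * v ^ 4 * w
      - 2805499477988601 * u ^ 14 * w ^ 2 - 887738349928290 * u ^ 8 * v * w ^ 2
      - 6903695714282535 * u ^ 2 * v ^ 2 * w ^ 2 - 1929173405564830 * u ^ 4 * w ^ 3) * h24
    + (178564337977604 * u ^ 28 + 606446243631294 * u ^ 22 * v - 2486376215453355 * u ^ 16 * v ^ 2
      - 9051260789896610 * u ^ 10 * v ^ 3 - 5593831968973710 * u ^ 4 * v ^ 4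
      + 134513662682220 * u ^ 18 * w + 4130615156868462 * u ^ 12 * v * w
      + 7356397274586510 * u ^ 6 * v ^ 2 * w + 952031376639000 * v ^ 3 * w
      - 707235412293285 * u ^ 8 * w ^ 2 + 2150752369671723 * u ^ 2 * v * w ^ 2) * h30'

theorem eq_zero_of_isReduced [IsReduced K] (h : Relations u v w x) :
    u = 0 ∧ v = 0 ∧ w = 0 ∧ x = 0 := by
  obtain rfl : u = 0 := pow_eq_zero_iff (by norm_num) |>.mp h.u_pow_58_eq_zero
  have h15 : 2 * x = 0 := by linear_combination -h.r15
  have h20 : 3 * w ^ 2 = 0 := by linear_combination h.r20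
  have h24 : 5 * v ^ 4 = 0 := by linear_combination h.r24
  have h30 : 9 * x ^ 2 + 4 * v ^ 5 + 2 * w ^ 3 = 0 := by linear_combination -h.r30
  have hx : x ^ 2 = 0 := by
    linear_combination 15 * h30 - 67 * x * h15 - 10 * w * h20 - 12 * v * h24
  have hw : w ^ 3 = 0 := by
    linear_combination 20 * h30 - 90 * x * h15 - 13 * w * h20 - 16 * v * h24
  have hv : v ^ 5 = 0 := by
    linear_combination 24 * h30 - 108 * x * h15 - 16 * w * h20 - 19 * v * h24
  exact ⟨rfl, eq_zero_of_pow_eq_zero hv, eq_zero_of_pow_eq_zero hw, eq_zero_of_pow_eq_zero hx⟩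

theorem iff_of_five_eq_zero (h5 : (5 : K) = 0) : Relations u v w x ↔
    x = 3 * u ^ 15 ∧ u ^ 24 = 0 ∧ w ^ 2 = u ^ 10 * w + 2 * u ^ 20 ∧ v ^ 5 = 2 * u ^ 20 * w := by
  constructor
  · rintro ⟨h15, h20, h24, h30⟩
    have hx : x - 3 * u ^ 15 = 0 := by linear_combination -3 * h15 - x * h5
    have hw : w ^ 2 - u ^ 10 * w - 2 * u ^ 20 = 0 := by
      linear_combination 2 * h20 - (4 * u ^ 20 + 18 * u ^ 14 * v + 5 * u ^ 10 * w
        + 24 * u ^ 8 * v ^ 2 + 12 * u ^ 4 * v * w + 4 * u ^ 2 * v ^ 3 + w ^ 2) * h5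
    have hu : u ^ 24 = 0 := by
      linear_combination -h24 - u ^ 4 * hw + (2 * u ^ 24 + 12 * u ^ 18 * v + 4 * u ^ 14 * w
        + 21 * u ^ 12 * v ^ 2 + 12 * u ^ 8 * v * w + 12 * u ^ 6 * v ^ 3 + 2 * u ^ 4 * w ^ 2
        + 6 * u ^ 2 * v ^ 2 * w + v ^ 4) * h5
    refine ⟨sub_eq_zero.mp hx, hu, by linear_combination hw, ?_⟩
    linear_combination h30 + (2 * u ^ 15 + 2 * u ^ 9 * v + u ^ 5 * w - x) * hx
      + (2 * w - u ^ 4 * v) * hw + (u ^ 6 - v) * hu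
      + (u ^ 30 + u ^ 24 * v + u ^ 20 * w - u ^ 15 * x - 2 * u ^ 14 * v * w + 2 * u ^ 12 * v ^ 3
        + u ^ 10 * w ^ 2 + 2 * u ^ 9 * v * x - 6 * u ^ 8 * v ^ 2 * w + 7 * u ^ 6 * v ^ 4
        + u ^ 5 * w * x - u ^ 4 * v * w ^ 2 + 2 * u ^ 2 * v ^ 3 * w + v ^ 5 + 2 * x ^ 2) * h5
  · rintro ⟨rfl, hu, hw, hv⟩
    constructor
    · linear_combination -u ^ 15 * h5
    · linear_combination -2 * hw + (u ^ 20 + 9 * u ^ 14 * v + 2 * u ^ 10 * w + 12 * u ^ 8 * v ^ 2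
        + 6 * u ^ 4 * v * w + 2 * u ^ 2 * v ^ 3 + w ^ 2) * h5
    · linear_combination -u ^ 4 * hw - hu + (2 * u ^ 24 + 12 * u ^ 18 * v + 4 * u ^ 14 * w
        + 21 * u ^ 12 * v ^ 2 + 12 * u ^ 8 * v * w + 12 * u ^ 6 * v ^ 3 + 2 * u ^ 4 * w ^ 2
        + 6 * u ^ 2 * v ^ 2 * w + v ^ 4) * h5
    · linear_combination hv - (2 * w - u ^ 4 * v) * hw - (u ^ 6 - v) * hu
        - (16 * u ^ 30 + 7 * u ^ 24 * v + 4 * u ^ 20 * w - 2 * u ^ 14 * v * w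
          + 2 * u ^ 12 * v ^ 3 + u ^ 10 * w ^ 2 - 6 * u ^ 8 * v ^ 2 * w
          + 7 * u ^ 6 * v ^ 4 - u ^ 4 * v * w ^ 2 + 2 * u ^ 2 * v ^ 3 * w + v ^ 5) * h5

end Relations

noncomputable section

section Fibre

open scoped Polynomial

section Step

variable {B : Type*} [CommRing B]

/-- The middle step of the tower `Fibre`: `B[w]/(w² - u¹⁰w - 2u²⁰)`. -/
abbrev AdjoinW (u : B) : Type _ :=
  AdjoinRoot (Polynomial.X ^ 2 - Polynomial.C (u ^ 10) * Polynomial.X - Polynomial.C (2 * u ^ 20))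

/-- The top step of the tower `Fibre`: `B[v]/(v⁵ - 2u²⁰w)`. -/
abbrev AdjoinV (u w : B) : Type _ :=
  AdjoinRoot (Polynomial.X ^ 5 - Polynomial.C (2 * u ^ 20 * w))

theorem AdjoinW.root_sq (u : B) : (AdjoinRoot.root _ : AdjoinW u) ^ 2 =
    AdjoinRoot.of _ u ^ 10 * AdjoinRoot.root _ + 2 * AdjoinRoot.of _ u ^ 20 := by
  have h := AdjoinRoot.mk_self (f := Polynomial.X ^ 2 - Polynomial.C (u ^ 10) * Polynomial.X -
    Polynomial.C (2 * u ^ 20))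
  simp only [map_sub, map_mul (AdjoinRoot.mk _), map_pow (AdjoinRoot.mk _), AdjoinRoot.mk_X,
    AdjoinRoot.mk_C, map_mul (AdjoinRoot.of _), map_pow (AdjoinRoot.of _), map_ofNat] at h
  linear_combination h

theorem AdjoinV.root_pow (u w : B) : (AdjoinRoot.root _ : AdjoinV u w) ^ 5 =
    2 * AdjoinRoot.of _ u ^ 20 * AdjoinRoot.of _ w := by
  have h := AdjoinRoot.mk_self (f := Polynomial.X ^ 5 - Polynomial.C (2 * u ^ 20 * w))
  simp only [map_sub, map_pow (AdjoinRoot.mk _), AdjoinRoot.mk_X,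
    AdjoinRoot.mk_C, map_mul (AdjoinRoot.of _), map_pow (AdjoinRoot.of _), map_ofNat] at h
  linear_combination h

variable {k K : Type*} [CommRing k] [CommRing K] [Algebra k B] [Algebra k K]

/-- The extension of `φ` to `AdjoinW u` that sends the adjoined root to `w`. -/
def AdjoinW.lift (φ : B →ₐ[k] K) {u : B} {w : K} (h : w ^ 2 = φ u ^ 10 * w + 2 * φ u ^ 20) :
    AdjoinW u →ₐ[k] K :=
  AdjoinRoot.liftAlgHom _ φ w (by simp [h, Polynomial.eval₂_pow, map_ofNat φ 2])

/-- The extension of `φ` to `AdjoinV u w` that sends the adjoined root to `v`. -/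
def AdjoinV.lift (φ : B →ₐ[k] K) {u w : B} {v : K} (h : v ^ 5 = 2 * φ u ^ 20 * φ w) :
    AdjoinV u w →ₐ[k] K :=
  AdjoinRoot.liftAlgHom _ φ v (by simp [h, Polynomial.eval₂_pow, map_ofNat φ 2])

end Step

variable (k : Type*)

section CommRing

variable [CommRing k]

/-- The bottom step of the tower `Fibre`: `k[u]/(u²⁴)`. -/
abbrev AdjoinU : Type _ := AdjoinRoot (Polynomial.X ^ 24 : k[X])

/-- The first two steps of the tower `Fibre`: `k[u,w]/(u²⁴, w² - u¹⁰w - 2u²⁰)`. -/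
abbrev AdjoinUW : Type _ := AdjoinW (AdjoinRoot.root _ : AdjoinU k)

/-- The algebra `k[u,v,w]/(u²⁴, w² - u¹⁰w - 2u²⁰, v⁵ - 2u²⁰w)`, encoded as a tower of simple
extensions. When `5 = 0` in `k` it is the base change to `k` of `ℤ[u,v,w,x]/I`. -/
abbrev Fibre : Type _ :=
  AdjoinV (AdjoinRoot.of _ (AdjoinRoot.root _)) (AdjoinRoot.root _ : AdjoinUW k)

/-- The generator `u` of `Fibre k`. -/
def Fibre.u : Fibre k := AdjoinRoot.of _ (AdjoinRoot.of _ (AdjoinRoot.root _))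

/-- The generator `v` of `Fibre k`. -/
def Fibre.v : Fibre k := AdjoinRoot.root _

/-- The generator `w` of `Fibre k`. -/
def Fibre.w : Fibre k := AdjoinRoot.of _ (AdjoinRoot.root _)

variable {k}

theorem five_eq_zero_of_algebra (h5 : (5 : k) = 0) (K : Type*) [CommRing K] [Algebra k K] :
    (5 : K) = 0 := by
  rw [← map_ofNat (algebraMap k K) 5, h5, map_zero]

namespace Fibre

theorem relations (h5 : (5 : k) = 0) :
    Relations (Fibre.u k) (Fibre.v k) (Fibre.w k) (3 * Fibre.u k ^ 15) := by
  have hu : (AdjoinRoot.root _ : AdjoinU k) ^ 24 = 0 := by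
    rw [← AdjoinRoot.mk_X, ← map_pow, AdjoinRoot.mk_self]
  refine (Relations.iff_of_five_eq_zero (five_eq_zero_of_algebra h5 _)).mpr
    ⟨rfl, ?_, ?_, AdjoinV.root_pow _ _⟩
  · simp only [Fibre.u, ← map_pow, hu, map_zero]
  · simp only [Fibre.u, Fibre.w, ← map_pow, AdjoinW.root_sq, map_add, map_mul, map_ofNat]

variable {K : Type*} [CommRing K] [Algebra k K] {u v w x : K}

theorem algHom_ext {f g : Fibre k →ₐ[k] K} (hu : f (Fibre.u k) = g (Fibre.u k))
    (hv : f (Fibre.v k) = g (Fibre.v k)) (hw : f (Fibre.w k) = g (Fibre.w k)) : f = g :=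
  AdjoinRoot.algHom_ext' (AdjoinRoot.algHom_ext' (AdjoinRoot.algHom_ext hu) hw) hv

/-- The homomorphism from `Fibre k` determined by elements satisfying the relations; the element
`x` is redundant because `x = 3u¹⁵` when `5 = 0`. -/
def lift (h5 : (5 : k) = 0) (h : Relations u v w x) : Fibre k →ₐ[k] K :=
  have h' := (Relations.iff_of_five_eq_zero (five_eq_zero_of_algebra h5 K)).mp h
  have hu : Polynomial.eval₂ (Algebra.ofId k K) u (Polynomial.X ^ 24 : k[X]) = 0 := by
    simpa using h'.2.1
  AdjoinV.lift (v := v)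
    (AdjoinW.lift (w := w) (AdjoinRoot.liftAlgHom _ (Algebra.ofId k K) u hu)
      (by simpa using h'.2.2.1))
    (by simpa [AdjoinW.lift] using h'.2.2.2)

variable (h5 : (5 : k) = 0) (h : Relations u v w x)

theorem lift_u : lift h5 h (Fibre.u k) = u := by simp [lift, AdjoinV.lift, AdjoinW.lift, Fibre.u]

theorem lift_v : lift h5 h (Fibre.v k) = v := by simp [lift, AdjoinV.lift, Fibre.v]

theorem lift_w : lift h5 h (Fibre.w k) = w := by simp [lift, AdjoinV.lift, AdjoinW.lift, Fibre.w]

theorem lift_x : lift h5 h (3 * Fibre.u k ^ 15) = x := by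
  have h5' := five_eq_zero_of_algebra h5 K
  have hlift := (relations h5).map (lift h5 h : Fibre k →+* K)
  calc lift h5 h (3 * Fibre.u k ^ 15)
      = 3 * lift h5 h (Fibre.u k) ^ 15 := ((Relations.iff_of_five_eq_zero h5').mp hlift).1
    _ = 3 * u ^ 15 := by rw [lift_u]
    _ = x := ((Relations.iff_of_five_eq_zero h5').mp h).1.symm

end Fibre

end CommRing

section Field

variable [Field k]

theorem finrank_adjoinU : Module.finrank k (AdjoinU k) = 24 := by
  rw [finrank_adjoinRoot _ (Polynomial.monic_X_pow 24), Module.finrank_self,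
    Polynomial.natDegree_X_pow, one_mul]

theorem finrank_adjoinUW : Module.finrank k (AdjoinUW k) = 48 := by
  have : Nontrivial (AdjoinU k) :=
    Module.nontrivial_of_finrank_pos (R := k) (by simp [finrank_adjoinU])
  rw [finrank_adjoinRoot _ (monic_X_sq_sub_C_mul_X_sub_C _ _), finrank_adjoinU,
    natDegree_X_sq_sub_C_mul_X_sub_C]

theorem Fibre.finrank_eq : Module.finrank k (Fibre k) = 240 := by
  have : Nontrivial (AdjoinUW k) :=
    Module.nontrivial_of_finrank_pos (R := k) (by simp [finrank_adjoinUW])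
  rw [finrank_adjoinRoot _ (Polynomial.monic_X_pow_sub_C _ (by norm_num)), finrank_adjoinUW,
    Polynomial.natDegree_X_pow_sub_C]

end Field

end Fibre

section RelIdeal

theorem relIdeal_le_ker_iff {K : Type*} [CommRing K] (φ : MvPolynomial (Fin 4) ℤ →+* K) :
    relIdeal ≤ RingHom.ker φ ↔ Relations (φ u) (φ v) (φ w) (φ x) := by
  rw [relIdeal, Ideal.span_le]
  simp only [Set.insert_subset_iff, Set.singleton_subset_iff, SetLike.mem_coe, RingHom.mem_ker,
    r15, r20, r24, r30, map_sub, map_add, map_mul, map_pow, map_neg, map_ofNat]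
  exact ⟨fun ⟨h15, h20, h24, h30⟩ ↦ ⟨h15, h20, h24, h30⟩, fun h ↦ ⟨h.r15, h.r20, h.r24, h.r30⟩⟩

theorem X_mem_radical_relIdeal (i : Fin 4) : X i ∈ relIdeal.radical := by
  have : IsReduced (MvPolynomial (Fin 4) ℤ ⧸ relIdeal.radical) :=
    (Ideal.isRadical_iff_quotient_reduced _).mp relIdeal.radical_isRadical
  have h := (relIdeal_le_ker_iff (Ideal.Quotient.mk relIdeal.radical)).mp
    (Ideal.le_radical.trans Ideal.mk_ker.ge)
  obtain ⟨hu, hv, hw, hx⟩ := h.eq_zero_of_isReduced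
  rw [Ideal.Quotient.eq_zero_iff_mem] at hu hv hw hx
  fin_cases i <;> assumption

theorem relIdeal_eq_ofList : relIdeal = Ideal.ofList [r15, r20, r24, r30] := by
  simp [relIdeal, Ideal.ofList, Set.insert_def]

end RelIdeal

section BaseChange

open scoped TensorProduct

variable {k : Type*} [CommRing k]

/-- The map `ℤ[u,v,w,x]/I → Fibre k` that sends `x` to `3u¹⁵`. -/
def toFibre (h5 : (5 : k) = 0) : MvPolynomial (Fin 4) ℤ ⧸ relIdeal →ₐ[ℤ] Fibre k :=
  Ideal.Quotient.liftₐ relIdeal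
    (aeval ![Fibre.u k, Fibre.v k, Fibre.w k, 3 * Fibre.u k ^ 15])
    ((relIdeal_le_ker_iff (aeval _).toRingHom).mpr
      (by simpa [u, v, w, x] using Fibre.relations h5))

theorem toFibre_mk_X (h5 : (5 : k) = 0) (i : Fin 4) :
    toFibre h5 (Ideal.Quotient.mk relIdeal (X i)) =
      ![Fibre.u k, Fibre.v k, Fibre.w k, 3 * Fibre.u k ^ 15] i :=
  aeval_X _ i

theorem relations_tmul_mk :
    Relations (1 ⊗ₜ Ideal.Quotient.mk relIdeal u : k ⊗[ℤ] (MvPolynomial (Fin 4) ℤ ⧸ relIdeal))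
      (1 ⊗ₜ Ideal.Quotient.mk relIdeal v) (1 ⊗ₜ Ideal.Quotient.mk relIdeal w)
      (1 ⊗ₜ Ideal.Quotient.mk relIdeal x) :=
  ((relIdeal_le_ker_iff (Ideal.Quotient.mk relIdeal)).mp Ideal.mk_ker.ge).map
    (Algebra.TensorProduct.includeRight (R := ℤ) (A := k)).toRingHom

/-- When `5 = 0` in `k`, the base change of `ℤ[u,v,w,x]/I` is the tower `Fibre k`. -/
def baseChangeEquivFibre (h5 : (5 : k) = 0) :
    k ⊗[ℤ] (MvPolynomial (Fin 4) ℤ ⧸ relIdeal) ≃ₐ[k] Fibre k :=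
  .ofAlgHom (AlgHom.liftEquiv ℤ k _ _ (toFibre h5)) (Fibre.lift h5 relations_tmul_mk)
    (by
      apply Fibre.algHom_ext <;>
      simp [toFibre_mk_X, Fibre.lift_u, Fibre.lift_v, Fibre.lift_w, u, v, w])
    (by
      refine Algebra.TensorProduct.ext_ring
        (Ideal.Quotient.algHom_ext ℤ (MvPolynomial.algHom_ext fun i ↦ ?_))
      fin_cases i
      · simp [toFibre_mk_X, Fibre.lift_u, u]
      · simp [toFibre_mk_X, Fibre.lift_v, v]
      · simp [toFibre_mk_X, Fibre.lift_w, w]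
      · simp [toFibre_mk_X, Fibre.lift_x, x])

end BaseChange

theorem finrank_quotient_relIdeal [Module.Free ℤ (MvPolynomial (Fin 4) ℤ ⧸ relIdeal)] :
    Module.finrank ℤ (MvPolynomial (Fin 4) ℤ ⧸ relIdeal) = 240 := by
  have : Fact (Nat.Prime 5) := ⟨Nat.prime_five⟩
  rw [← Module.finrank_baseChange (R := ZMod 5),
    (baseChangeEquivFibre (k := ZMod 5) rfl).toLinearEquiv.finrank_eq, Fibre.finrank_eq]

end

end E8C

/-- `ℤ[u,v,w,x]/(r₁₅, r₂₀, r₂₄, r₃₀)` is a free `ℤ`-module of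
rank `240` (the integral cohomology `H^*(E₈/C; ℤ)` is torsion-free with total
Betti number `240`). -/
theorem free_rank_E8C :
    Module.Free ℤ (MvPolynomial (Fin 4) ℤ ⧸ E8C.relIdeal) ∧
    Module.rank ℤ (MvPolynomial (Fin 4) ℤ ⧸ E8C.relIdeal) = 240 := by
  have hfree : Module.Free ℤ (MvPolynomial (Fin 4) ℤ ⧸ E8C.relIdeal) := by
    have hrad := E8C.X_mem_radical_relIdeal
    rw [E8C.relIdeal_eq_ofList] at hrad ⊢
    exact CompleteIntersection.free_quotient_ofList (by simp) hrad
  have := CompleteIntersection.finite_quotient_of_X_mem_radical E8C.X_mem_radical_relIdeal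
  refine ⟨hfree, ?_⟩
  rw [← Module.finrank_eq_rank, E8C.finrank_quotient_relIdeal, Nat.cast_ofNat]
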